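/- arXiv:0707.0649 — 2 statements merged into one kernel-verified Lean document; each statement's English description precedes it below -/
import Mathlib

section
/- Let m > 0, let N ≥ 1 and L ≥ 1 be integers, and let γ₁, …, γ_N be independent random variables each with density p_γ(x) = m^m x^(m−1) e^(−m x)/Γ(m) on (0, ∞). Define R(γ)² = (1/π)·Γ(N/2 + 1)^(2/N)·(∏_{n=1}^N γ_n)^(1/N) and, for ρ > 0, the sphere lower bound P_slb(ρ) = 1 − E[(1 − Γ̄(N/2, R(γ)²ρ/2))^L], where Γ̄(a, x) = (1/Γ(a)) ∫_x^∞ t^(a−1) e^(−t) dt is the normalized upper incomplete Gamma function. Then the diversity order of the sphere lower bound equals mN for every L ≥ 1; that is, lim_{ρ→∞} (− log P_slb(ρ) / log ρ) = mN. -/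
open MeasureTheory ProbabilityTheory Real Set Filter

/-- The normalized upper incomplete Gamma function
`Γ̄(a, x) = (1/Γ(a)) ∫_x^∞ t^(a−1) e^(−t) dt`. -/
noncomputable def normGammaBar (a x : ℝ) : ℝ :=
  (∫ t in Set.Ioi x, t ^ (a - 1) * Real.exp (-t)) / Real.Gamma a

/-- The density `p_γ(x) = m^m x^(m−1) e^(−m x)/Γ(m)` on `(0, ∞)` of the squared
Nakagami-`m` fading power gain. -/
noncomputable def nakagamiPowerDensity (m : ℝ) : ℝ → ℝ := fun x =>
  if 0 < x then m ^ m * x ^ (m - 1) * Real.exp (-m * x) / Real.Gamma m else 0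

lemma aux_int {a x : ℝ} (ha : 0 < a) (hx : 0 ≤ x) :
    IntegrableOn (fun t : ℝ => t ^ (a - 1) * Real.exp (-t)) (Ioi x) := by
  refine IntegrableOn.mono_set ?_ (Ioi_subset_Ioi hx)
  refine (Real.GammaIntegral_convergent ha).congr_fun (fun t _ => ?_) measurableSet_Ioi
  simp only; ring

lemma aux_Gamma {a : ℝ} (ha : 0 < a) :
    Real.Gamma a = ∫ t in Ioi (0:ℝ), t ^ (a - 1) * Real.exp (-t) := by
  rw [Real.Gamma_eq_integral ha]
  congr 1; ext t; ring

lemma aux_anti {a x y : ℝ} (ha : 0 < a) (hx : 0 ≤ x) (hxy : x ≤ y) :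
    normGammaBar a y ≤ normGammaBar a x := by
  unfold normGammaBar
  refine div_le_div_of_nonneg_right ?_ (Real.Gamma_pos_of_pos ha).le
  refine setIntegral_mono_set (aux_int ha hx) ?_ (Ioi_subset_Ioi hxy).eventuallyLE
  refine (ae_restrict_iff' measurableSet_Ioi).2 (ae_of_all _ fun t ht => ?_)
  have : 0 < t := lt_of_le_of_lt hx ht
  simp only [Pi.zero_apply]; positivity

lemma aux_zero {a : ℝ} (ha : 0 < a) : normGammaBar a 0 = 1 := by
  unfold normGammaBar
  rw [← aux_Gamma ha, div_self (Real.Gamma_pos_of_pos ha).ne']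

lemma aux_pos {a x : ℝ} (ha : 0 < a) (hx : 0 ≤ x) : 0 < normGammaBar a x := by
  unfold normGammaBar
  refine div_pos ?_ (Real.Gamma_pos_of_pos ha)
  have hp : ∀ t ∈ Ioi x, 0 < t ^ (a - 1) * Real.exp (-t) := fun t ht => by
    have : 0 < t := lt_of_le_of_lt hx ht
    positivity
  rw [setIntegral_pos_iff_support_of_nonneg_ae _ (aux_int ha hx)]
  · refine lt_of_lt_of_le ?_ (measure_mono (s := Ioi x) ?_)
    · simp
    · intro t ht
      exact ⟨(hp t ht).ne', ht⟩
  · exact (ae_restrict_iff' measurableSet_Ioi).2 (ae_of_all _ fun t ht => (hp t ht).le)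

lemma aux_tail {a x p : ℝ} (ha : 0 < a) (hx : 0 < x) (hp : 0 < p) :
    normGammaBar a x ≤ Real.Gamma (a + p) / Real.Gamma a * x ^ (-p) := by
  unfold normGammaBar
  rw [div_mul_eq_mul_div]
  refine div_le_div_of_nonneg_right ?_ (Real.Gamma_pos_of_pos ha).le
  rw [aux_Gamma (by linarith : 0 < a + p), ← integral_mul_const]
  have hi := (aux_int (by linarith : 0 < a + p) le_rfl).mul_const (x ^ (-p))
  refine le_trans (setIntegral_mono_on (aux_int ha hx.le)
    (IntegrableOn.mono_set hi (Ioi_subset_Ioi hx.le)) measurableSet_Ioi ?_)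
    (setIntegral_mono_set hi ?_ (Ioi_subset_Ioi hx.le).eventuallyLE)
  · intro t ht
    have ht0 : 0 < t := lt_trans hx ht
    have h1 : 1 ≤ t ^ p * x ^ (-p) := by
      rw [Real.rpow_neg hx.le, ← div_eq_mul_inv, one_le_div (by positivity)]
      exact Real.rpow_le_rpow hx.le (le_of_lt ht) hp.le
    have h2 : t ^ (a + p - 1) = t ^ (a - 1) * t ^ p := by
      rw [← Real.rpow_add ht0]; ring_nf
    rw [h2]
    have h3 : 0 < t ^ (a - 1) * Real.exp (-t) := by positivity
    nlinarith
  · refine (ae_restrict_iff' measurableSet_Ioi).2 (ae_of_all _ fun t ht => ?_)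
    have : 0 < t := ht
    simp only [Pi.zero_apply]; positivity

lemma aux_final {P : ℝ → ℝ} {d C : ℝ} (hd : 0 < d) (hC : 0 < C)
    (hlow : ∀ᶠ ρ in atTop, C * ρ ^ (-d) ≤ P ρ)
    (hup : ∀ s, 0 < s → s < d → ∃ K, 0 < K ∧ ∀ᶠ ρ in atTop, P ρ ≤ K * ρ ^ (-s)) :
    Tendsto (fun ρ => - Real.log (P ρ) / Real.log ρ) atTop (nhds d) := by
  have hlim : ∀ K s : ℝ, Tendsto (fun ρ => -Real.log K / Real.log ρ + s) atTop (nhds s) := by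
    intro K s
    have := (tendsto_const_nhds (x := -Real.log K)).div_atTop Real.tendsto_log_atTop
    simpa using this.add_const s
  rw [tendsto_order]
  constructor
  · intro b hb
    obtain ⟨s, hs1, hs2⟩ := exists_between (max_lt hb hd)
    have hs0 := lt_of_le_of_lt (le_max_right _ _) hs1
    have hbs := lt_of_le_of_lt (le_max_left _ _) hs1
    obtain ⟨K, hK, hev⟩ := hup s hs0 hs2
    filter_upwards [hlow, hev, eventually_gt_atTop 1, (hlim K s).eventually_const_lt hbs]
      with ρ h1 h2 h3 h4
    have hρ : 0 < ρ := by linarith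
    have hl : 0 < Real.log ρ := Real.log_pos h3
    refine lt_of_lt_of_le h4 ?_
    have hP : 0 < P ρ := lt_of_lt_of_le (by positivity) h1
    have := Real.log_le_log hP h2
    rw [Real.log_mul hK.ne' (by positivity), Real.log_rpow hρ] at this
    rw [le_div_iff₀ hl, add_mul, div_mul_cancel₀ _ hl.ne']
    linarith
  · intro b hb
    filter_upwards [hlow, eventually_gt_atTop 1, (hlim C d).eventually_lt_const hb]
      with ρ h1 h3 h4
    have hρ : 0 < ρ := by linarith
    have hl : 0 < Real.log ρ := Real.log_pos h3
    refine lt_of_le_of_lt ?_ h4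
    have := Real.log_le_log (by positivity) h1
    rw [Real.log_mul hC.ne' (by positivity), Real.log_rpow hρ] at this
    rw [div_le_iff₀ hl, add_mul, div_mul_cancel₀ _ hl.ne']
    linarith

lemma dens_meas (m : ℝ) : Measurable (nakagamiPowerDensity m) := by
  unfold nakagamiPowerDensity
  refine Measurable.ite (measurableSet_Ioi (a := (0:ℝ))) (by fun_prop) measurable_const

lemma dens_low {m : ℝ} (hm : 0 < m) : ∃ C, 0 < C ∧ ∀ e : ℝ, 0 < e → e ≤ 1 →
    ENNReal.ofReal (C * e ^ m) ≤
     (volume.withDensity (fun x => ENNReal.ofReal (nakagamiPowerDensity m x))) (Ioc 0 e) := by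
  have hG := Real.Gamma_pos_of_pos hm
  set K := m ^ m * Real.exp (-m) / Real.Gamma m with hK
  have hK0 : 0 < K := by positivity
  refine ⟨K / m, by positivity, fun e he he1 => ?_⟩
  rw [withDensity_apply _ measurableSet_Ioc]
  have hii : IntegrableOn (fun x : ℝ => K * x ^ (m - 1)) (Ioc 0 e) := by
    have := (intervalIntegral.intervalIntegrable_rpow' (a := 0) (b := e)
      (by linarith : -1 < m - 1)).const_mul K
    rwa [intervalIntegrable_iff_integrableOn_Ioc_of_le he.le] at this
  have h1 : K / m * e ^ m = ∫ x in Ioc 0 e, K * x ^ (m - 1) := by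
    rw [← intervalIntegral.integral_of_le he.le, intervalIntegral.integral_const_mul,
      integral_rpow (Or.inl (by linarith))]
    simp only [sub_add_cancel, Real.zero_rpow hm.ne']
    ring
  rw [h1, ofReal_integral_eq_lintegral_ofReal hii]
  · refine setLIntegral_mono' measurableSet_Ioc fun x hx => ENNReal.ofReal_le_ofReal ?_
    have hx0 : 0 < x := hx.1
    have hx1 : x ≤ 1 := hx.2.trans he1
    simp only [nakagamiPowerDensity, if_pos hx0, hK]
    rw [div_mul_eq_mul_div]
    refine div_le_div_of_nonneg_right ?_ hG.le
    have : Real.exp (-m) ≤ Real.exp (-m * x) := Real.exp_le_exp.2 (by nlinarith)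
    have h3 : 0 < m ^ m * x ^ (m - 1) := by positivity
    nlinarith
  · refine (ae_restrict_iff' measurableSet_Ioc).2 (ae_of_all _ fun t ht => ?_)
    have : 0 < t := ht.1
    simp only [Pi.zero_apply]; positivity

lemma dens_pos (m : ℝ) : (volume.withDensity
    (fun x => ENNReal.ofReal (nakagamiPowerDensity m x))) (Iic 0) = 0 := by
  rw [withDensity_apply _ measurableSet_Iic]
  rw [setLIntegral_congr_fun measurableSet_Iic (g := fun _ => 0)]
  · simp
  · intro x hx
    simp [nakagamiPowerDensity, not_lt.2 (show x ≤ 0 from hx)]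

lemma dens_mom {m s : ℝ} (hm : 0 < m) (hs : s < m) :
    ∫⁻ x, ENNReal.ofReal (x ^ (-s)) ∂(volume.withDensity
    (fun x => ENNReal.ofReal (nakagamiPowerDensity m x))) < ⊤ := by
  rw [lintegral_withDensity_eq_lintegral_mul _ (dens_meas m).ennreal_ofReal
    (by fun_prop : Measurable fun x : ℝ => ENNReal.ofReal (x ^ (-s)))]
  have hi := (integrableOn_rpow_mul_exp_neg_mul_rpow (p := 1) (s := m - s - 1) (b := m)
    (by linarith) one_pos hm).const_mul (m ^ m / Real.Gamma m)
  refine lt_of_le_of_lt ?_ hi.lintegral_lt_top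
  rw [← lintegral_indicator measurableSet_Ioi]
  refine lintegral_mono fun x => ?_
  by_cases hx : 0 < x
  · rw [indicator_of_mem (show x ∈ Ioi (0:ℝ) from hx)]
    simp only [Pi.mul_apply, nakagamiPowerDensity, if_pos hx]
    rw [← ENNReal.ofReal_mul (by have := Real.Gamma_pos_of_pos hm; positivity)]
    refine ENNReal.ofReal_le_ofReal (le_of_eq ?_)
    rw [show m - s - 1 = (m - 1) + (-s) by ring, Real.rpow_add hx, Real.rpow_one]
    ring
  · simp [nakagamiPowerDensity, hx]

lemma pow_bounds {y : ℝ} (h0 : 0 ≤ y) (h1 : y ≤ 1) {L : ℕ} (hL : 1 ≤ L) :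
    y ≤ 1 - (1 - y) ^ L ∧ 1 - (1 - y) ^ L ≤ L * y := by
  constructor
  · have := pow_le_pow_of_le_one (by linarith : 0 ≤ 1 - y) (by linarith) hL
    rw [pow_one] at this
    linarith
  · have := one_add_mul_le_pow (by linarith : -2 ≤ -y) L
    rw [← sub_eq_add_neg] at this
    linarith

/-- The sphere lower bound on the error probability in a Nakagami-`m` block-fading
channel with `N` fading blocks has diversity order `d = m N` for any `L ≥ 1`. -/
theorem slb_diversity_order
    {Ω : Type*} [MeasureSpace Ω] [IsProbabilityMeasure (ℙ : Measure Ω)]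
    (m : ℝ) (hm : 0 < m) (N L : ℕ) (hN : 1 ≤ N) (hL : 1 ≤ L)
    (γ : Fin N → Ω → ℝ)
    (hmeas : ∀ i, Measurable (γ i))
    (hindep : iIndepFun γ ℙ)
    (hlaw : ∀ i, Measure.map (γ i) ℙ
      = volume.withDensity (fun x => ENNReal.ofReal (nakagamiPowerDensity m x)))
    (Rsq : Ω → ℝ)
    (hRsq : ∀ ω, Rsq ω = (1 / Real.pi) * Real.Gamma ((N : ℝ) / 2 + 1) ^ ((2 : ℝ) / N)
        * (∏ i, γ i ω) ^ ((1 : ℝ) / N))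
    (Pslb : ℝ → ℝ)
    (hPslb : ∀ ρ, Pslb ρ
      = 1 - ∫ ω, (1 - normGammaBar ((N : ℝ) / 2) (Rsq ω * ρ / 2)) ^ L ∂ℙ) :
    Tendsto (fun ρ => - Real.log (Pslb ρ) / Real.log ρ) atTop (nhds (m * N)) := by
  have hN0 : (0:ℝ) < N := by exact_mod_cast hN
  have ha : (0:ℝ) < (N:ℝ) / 2 := by positivity
  set a : ℝ := (N:ℝ) / 2 with ha_def
  have hGp : 0 < Real.Gamma (a + 1) := Real.Gamma_pos_of_pos (by linarith)
  set c : ℝ := (1 / Real.pi) * Real.Gamma (a + 1) ^ ((2 : ℝ) / N) / 2 with hc_def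
  have hc : 0 < c := by have := Real.pi_pos; positivity
  have hX : ∀ ω ρ, Rsq ω * ρ / 2 = c * (∏ i, γ i ω) ^ ((1 : ℝ) / N) * ρ := by
    intro ω ρ; rw [hRsq, hc_def]; ring
  have hRm : Measurable Rsq := by
    have : Rsq = fun ω => (1 / Real.pi) * Real.Gamma (a + 1) ^ ((2 : ℝ) / N)
        * (∏ i, γ i ω) ^ ((1 : ℝ) / N) := funext hRsq
    rw [this]
    exact ((Finset.measurable_prod _ fun i _ => hmeas i).pow_const _).const_mul _
  have hpos : ∀ᵐ ω ∂(ℙ : Measure Ω), ∀ i, 0 < γ i ω := by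
    rw [ae_all_iff]
    intro i
    have := dens_pos m
    rw [← hlaw i, Measure.map_apply (hmeas i) measurableSet_Iic] at this
    rw [ae_iff]
    convert this using 2
    ext ω; simp
  -- the truncated function
  set h : ℝ → ℝ := fun x => normGammaBar a (max x 0) with hh
  have hanti : Antitone h := fun x y hxy =>
    aux_anti ha (le_max_right _ _) (max_le_max_right 0 hxy)
  have hhm : Measurable h := hanti.measurable
  have hh0 : ∀ x, 0 ≤ h x := fun x => (aux_pos ha (le_max_right _ _)).le
  have hh1 : ∀ x, h x ≤ 1 := fun x => by
    rw [← aux_zero ha]; exact aux_anti ha le_rfl (le_max_right _ _)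
  set Y : ℝ → Ω → ℝ := fun ρ ω => h (Rsq ω * ρ / 2) with hY
  have hYm : ∀ ρ, Measurable (Y ρ) := fun ρ => hhm.comp ((hRm.mul_const ρ).div_const 2)
  have hYi : ∀ ρ, Integrable (Y ρ) ℙ := fun ρ => by
    refine Integrable.of_bound (hYm ρ).aestronglyMeasurable 1 (ae_of_all _ fun ω => ?_)
    rw [Real.norm_eq_abs, abs_of_nonneg (hh0 _)]; exact hh1 _
  have hZi : ∀ ρ, Integrable (fun ω => (1 - Y ρ ω) ^ L) ℙ := fun ρ => by
    refine Integrable.of_bound ((measurable_const.sub (hYm ρ)).pow_const L).aestronglyMeasurable 1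
      (ae_of_all _ fun ω => ?_)
    have h0 : 0 ≤ 1 - Y ρ ω := sub_nonneg.2 (hh1 _)
    rw [Real.norm_eq_abs, abs_of_nonneg (pow_nonneg h0 _)]
    exact pow_le_one₀ h0 (sub_le_self _ (hh0 _))
  have hP : ∀ ρ, 0 < ρ → Pslb ρ = ∫ ω, (1 - (1 - Y ρ ω) ^ L) ∂ℙ := by
    intro ρ hρ
    rw [integral_sub (integrable_const _) (hZi ρ), hPslb]
    simp only [integral_const, probReal_univ, smul_eq_mul, mul_one]
    congr 1
    refine integral_congr_ae ?_
    filter_upwards [hpos] with ω hω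
    have : 0 < ∏ i, γ i ω := Finset.prod_pos fun i _ => hω i
    have h2 : 0 ≤ Rsq ω * ρ / 2 := by rw [hX]; positivity
    simp only [hY, hh, max_eq_left h2]
  have hWi : ∀ ρ, Integrable (fun ω => 1 - (1 - Y ρ ω) ^ L) ℙ := fun ρ =>
    (integrable_const _).sub (hZi ρ)
  have hPlow : ∀ ρ, 0 < ρ → ∫ ω, Y ρ ω ∂ℙ ≤ Pslb ρ := fun ρ hρ => by
    rw [hP ρ hρ]
    exact integral_mono (hYi ρ) (hWi ρ) fun ω => (pow_bounds (hh0 _) (hh1 _) hL).1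
  have hPup : ∀ ρ, 0 < ρ → Pslb ρ ≤ L * ∫ ω, Y ρ ω ∂ℙ := fun ρ hρ => by
    rw [hP ρ hρ, ← integral_const_mul]
    exact integral_mono (hWi ρ) ((hYi ρ).const_mul _) fun ω => (pow_bounds (hh0 _) (hh1 _) hL).2
  have hLpos : (0:ℝ) < L := by exact_mod_cast hL
  -- lower bound
  obtain ⟨C, hC, hCb⟩ := dens_low hm
  have hhc : 0 < h c := aux_pos ha (le_max_right _ _)
  refine aux_final (C := h c * C ^ N) (by positivity) (by positivity) ?_ ?_
  · filter_upwards [eventually_ge_atTop 1] with ρ hρ1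
    have hρ : 0 < ρ := by linarith
    refine le_trans ?_ (hPlow ρ hρ)
    set S : Set Ω := ⋂ i, γ i ⁻¹' (Ioc 0 ρ⁻¹) with hS
    have hSm : MeasurableSet S := MeasurableSet.iInter fun i => hmeas i measurableSet_Ioc
    have hSle : (C * (ρ⁻¹) ^ m) ^ N ≤ (ℙ : Measure Ω).real S := by
      rw [measureReal_def, ← ENNReal.ofReal_le_iff_le_toReal (measure_ne_top _ _)]
      rw [hS, hindep.meas_iInter (fun i => ⟨_, measurableSet_Ioc, rfl⟩)]
      rw [ENNReal.ofReal_pow (by positivity)]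
      calc ENNReal.ofReal (C * (ρ⁻¹) ^ m) ^ N
          = ∏ _i : Fin N, ENNReal.ofReal (C * (ρ⁻¹) ^ m) := by simp
        _ ≤ _ := by
          refine Finset.prod_le_prod' fun i _ => ?_
          rw [← Measure.map_apply (hmeas i) measurableSet_Ioc, hlaw i]
          exact hCb _ (by positivity) (inv_le_one_of_one_le₀ hρ1)
    have hpw : (C * (ρ⁻¹) ^ m) ^ N = C ^ N * ρ ^ (-(m * N)) := by
      rw [mul_pow, ← Real.rpow_natCast ((ρ⁻¹) ^ m), ← Real.rpow_mul (by positivity),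
        Real.inv_rpow hρ.le, Real.rpow_neg hρ.le]
    rw [mul_assoc, ← hpw]
    calc h c * (C * (ρ⁻¹) ^ m) ^ N ≤ h c * (ℙ : Measure Ω).real S := by gcongr
      _ = ∫ ω in S, h c ∂ℙ := by simp [mul_comm]
      _ ≤ ∫ ω in S, Y ρ ω ∂ℙ := by
        refine setIntegral_mono_on (integrable_const _).integrableOn (hYi ρ).integrableOn hSm ?_
        intro ω hω
        rw [hS, mem_iInter] at hω
        refine hanti ?_
        rw [hX]
        have h1 : ∏ i, γ i ω ≤ (ρ⁻¹) ^ (N:ℝ) := by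
          calc ∏ i, γ i ω ≤ ∏ _i : Fin N, ρ⁻¹ :=
                Finset.prod_le_prod (fun i _ => (hω i).1.le) (fun i _ => (hω i).2)
            _ = _ := by simp
        have h2 : (∏ i, γ i ω) ^ ((1:ℝ) / N) ≤ ρ⁻¹ := by
          calc (∏ i, γ i ω) ^ ((1:ℝ) / N) ≤ ((ρ⁻¹) ^ (N:ℝ)) ^ ((1:ℝ) / N) :=
                Real.rpow_le_rpow (Finset.prod_nonneg fun i _ => (hω i).1.le) h1 (by positivity)
            _ = ρ⁻¹ := by
              rw [← Real.rpow_mul (by positivity), mul_one_div_cancel hN0.ne', Real.rpow_one]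
        calc c * (∏ i, γ i ω) ^ ((1:ℝ) / N) * ρ ≤ c * ρ⁻¹ * ρ := by gcongr
          _ = c := by field_simp
      _ ≤ ∫ ω, Y ρ ω ∂ℙ := setIntegral_le_integral (hYi ρ) (ae_of_all _ fun ω => hh0 _)
  -- upper bound
  · intro d hd0 hdm
    obtain ⟨s, rfl⟩ : ∃ s, d = s * N := ⟨d / N, by field_simp⟩
    have hs0 : 0 < s := pos_of_mul_pos_left hd0 hN0.le
    have hsm : s < m := lt_of_mul_lt_mul_right hdm hN0.le
    set F : Ω → ℝ := fun ω => ∏ i, (γ i ω) ^ (-s) with hF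
    have hFm : Measurable F := Finset.measurable_prod _ fun i _ => (hmeas i).pow_const _
    have hFi : Integrable F ℙ := by
      refine ⟨hFm.aestronglyMeasurable, ?_⟩
      have hF0 : 0 ≤ᵐ[ℙ] F := by
        filter_upwards [hpos] with ω hω
        exact Finset.prod_nonneg fun i _ => Real.rpow_nonneg (hω i).le _
      rw [hasFiniteIntegral_iff_ofReal hF0]
      have e1 : ∫⁻ ω, ENNReal.ofReal (F ω) ∂ℙ
          = ∫⁻ ω, ∏ i, ENNReal.ofReal ((γ i ω) ^ (-s)) ∂ℙ := by
        refine lintegral_congr_ae ?_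
        filter_upwards [hpos] with ω hω
        exact ENNReal.ofReal_prod_of_nonneg fun i _ => Real.rpow_nonneg (hω i).le _
      have hgm : Measurable fun x : ℝ => ENNReal.ofReal (x ^ (-s)) := by fun_prop
      rw [e1, lintegral_prod_eq_prod_lintegral_of_indepFun Finset.univ
        (fun i ω => ENNReal.ofReal ((γ i ω) ^ (-s)))
        (hindep.comp (fun _ x => ENNReal.ofReal (x ^ (-s))) fun _ => hgm)
        (fun i => hgm.comp (hmeas i))]
      refine ENNReal.prod_lt_top fun i _ => ?_
      have := dens_mom hm hsm
      rwa [← hlaw i, lintegral_map hgm (hmeas i)] at this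
    set A : ℝ := Real.Gamma (a + s * N) / Real.Gamma a * c ^ (-(s * N)) with hA
    have hA0 : 0 < A := by
      have h1 := Real.Gamma_pos_of_pos ha
      have h2 := Real.Gamma_pos_of_pos (by linarith : 0 < a + s * N)
      positivity
    have hIF : 0 ≤ ∫ ω, F ω ∂ℙ := by
      refine integral_nonneg_of_ae ?_
      filter_upwards [hpos] with ω hω
      exact Finset.prod_nonneg fun i _ => Real.rpow_nonneg (hω i).le _
    refine ⟨L * (A * (∫ ω, F ω ∂ℙ + 1)), by positivity, ?_⟩
    filter_upwards [eventually_gt_atTop 0] with ρ hρ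
    refine (hPup ρ hρ).trans ?_
    rw [mul_assoc]
    refine mul_le_mul_of_nonneg_left ?_ hLpos.le
    have hρs : 0 < ρ ^ (-(s * N)) := by positivity
    calc ∫ ω, Y ρ ω ∂ℙ ≤ ∫ ω, A * ρ ^ (-(s * N)) * F ω ∂ℙ := by
          refine integral_mono_ae (hYi ρ) (hFi.const_mul _) ?_
          filter_upwards [hpos] with ω hω
          have hg : 0 < ∏ i, γ i ω := Finset.prod_pos fun i _ => hω i
          have h2 : 0 < c * (∏ i, γ i ω) ^ ((1 : ℝ) / N) * ρ := by positivity
          have h3 := aux_tail ha h2 hd0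
          simp only [hY, hh, hX, max_eq_left h2.le]
          refine h3.trans (le_of_eq ?_)
          rw [Real.mul_rpow (by positivity) hρ.le, Real.mul_rpow hc.le (by positivity),
            ← Real.rpow_mul hg.le, show (1:ℝ) / N * -(s * N) = -s by field_simp,
            ← Real.finsetProd_rpow _ _ (fun i _ => (hω i).le)]
          simp only [hA, hF]; ring
      _ = A * ρ ^ (-(s * N)) * ∫ ω, F ω ∂ℙ := integral_const_mul _ _
      _ ≤ _ := by nlinarith [mul_pos hA0 hρs]
end

section
/- Let N ≥ 1, let μ be the Gaussian measure on ℝ^N with density p(z) = (2πσ²)^(−N/2) exp(−‖z‖²/(2σ²)) with respect to Lebesgue measure (σ > 0), and let B be the closed Euclidean ball of radius R > 0 centered at the origin. Then for every Lebesgue-measurable set V ⊆ ℝ^N whose Lebesgue measure equals that of B, one has μ(ℝ^N \ V) ≥ μ(ℝ^N \ B); i.e., among all sets of a given volume, the origin-centered ball minimizes the Gaussian probability of its complement. -/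
open MeasureTheory Set

/-- Among all measurable sets of a given volume in `ℝ^N`, the origin-centered
Euclidean ball minimizes the Gaussian probability of the complement: if `μ` is the
centered isotropic Gaussian measure with variance `σ²` per component and `V` has
the same Lebesgue measure as the closed ball `B` of radius `R` centered at `0`,
then `μ(ℝ^N \ V) ≥ μ(ℝ^N \ B)`. -/
theorem gaussian_complement_ball_min
    (N : ℕ) (hN : 1 ≤ N) (σ R : ℝ) (hσ : 0 < σ) (hR : 0 < R)
    (μ : Measure (EuclideanSpace ℝ (Fin N)))
    (hμ : μ = volume.withDensity (fun z => ENNReal.ofReal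
      ((2 * Real.pi * σ ^ 2) ^ (-(N : ℝ) / 2) * Real.exp (-‖z‖ ^ 2 / (2 * σ ^ 2)))))
    (V : Set (EuclideanSpace ℝ (Fin N))) (hV : MeasurableSet V)
    (hvol : volume V = volume (Metric.closedBall (0 : EuclideanSpace ℝ (Fin N)) R)) :
    μ (Metric.closedBall (0 : EuclideanSpace ℝ (Fin N)) R)ᶜ ≤ μ Vᶜ := by
  set B := Metric.closedBall (0 : EuclideanSpace ℝ (Fin N)) R with hBdef
  have hB : MeasurableSet B := Metric.isClosed_closedBall.measurableSet
  have hfin : volume B ≠ ⊤ := (isCompact_closedBall _ _).measure_lt_top.ne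
  have hdiff : volume (V \ B) = volume (B \ V) := by
    have h1 := measure_diff_add_inter (μ := volume) V hB
    have h2 := measure_diff_add_inter (μ := volume) B hV
    rw [Set.inter_comm B V] at h2
    have hi : volume (V ∩ B) ≠ ⊤ :=
      ne_top_of_le_ne_top hfin (measure_mono Set.inter_subset_right)
    exact (ENNReal.add_left_inj hi).1 (h1.trans (hvol.trans h2.symm))
  set A : ℝ := (2 * Real.pi * σ ^ 2) ^ (-(N : ℝ) / 2) with hA
  have hA0 : 0 ≤ A := by positivity
  set c : ENNReal := ENNReal.ofReal (A * Real.exp (-R ^ 2 / (2 * σ ^ 2))) with hc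
  have key : μ (V \ B) ≤ μ (B \ V) := by
    rw [hμ, withDensity_apply _ (hV.diff hB), withDensity_apply _ (hB.diff hV)]
    calc _ ≤ ∫⁻ _ in V \ B, c := by
          refine setLIntegral_mono' (hV.diff hB) fun z hz => ?_
          have hz' : R ≤ ‖z‖ := by
            have := hz.2
            simp only [hBdef, mem_closedBall_zero_iff, not_le] at this
            exact this.le
          rw [hc]
          gcongr
      _ = ∫⁻ _ in B \ V, c := by
          rw [setLIntegral_const, setLIntegral_const, hdiff]
      _ ≤ _ := by
          refine setLIntegral_mono' (hB.diff hV) fun z hz => ?_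
          have hz' : ‖z‖ ≤ R := by
            simpa only [hBdef, mem_closedBall_zero_iff] using hz.1
          rw [hc]
          gcongr
  rw [← measure_inter_add_diff Bᶜ hV, ← measure_inter_add_diff Vᶜ hB]
  have e1 : Bᶜ ∩ V = V \ B := by ext; simp [and_comm]
  have e2 : Vᶜ ∩ B = B \ V := by ext; simp [and_comm]
  have e3 : Bᶜ \ V = Vᶜ \ B := by ext; simp [and_comm]
  rw [e1, e2, e3]
  gcongr
end
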